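/- (Inductive step of Theorem 1.) Let E, F be real normed vector spaces, a_x, a_u class-𝒦 functions, and f : E → F → E satisfy ‖f(x¹,u) − f(x²,u)‖ ≤ a_x(‖x¹ − x²‖) and ‖f(x,u¹) − f(x,u²)‖ ≤ a_u(‖u¹ − u²‖) for all arguments. Let U_c ⊆ F, let X_f ⊆ E be nonempty, let L ≥ 1 and k_f with L dividing k_f, and let 0 ≤ k ≤ k_f − 2. Suppose v is an admissible blocked sequence at time k (v(i) ∈ U_c for i = 1,…,N(k)) whose nominal blocked-input trajectory from x̃ over horizon k_f − k has terminal distance Δ(x(k_f−k|k), X_f) ≤ γ. Let d ∈ F with ‖d‖ ≤ d̄ and x̃′ = f(x̃, v(1) + d). Then there exists an admissible blocked sequence v′ at time k+1 (namely v itself if L does not divide k+1, and the shift v′(i) = v(i+1) otherwise) whose nominal blocked-input trajectory from x̃′ over horizon k_f − k − 1 has terminal distance Δ(x(k_f−k−1|k+1), X_f) ≤ γ + β_{k_f−k−1}(d̄), where β_0(d) = a_u(d) and β_j(d) = a_u(d) + a_x(β_{j−1}(d)). -/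

import Mathlib

/-!
Time `k + 1` predictions can reuse the inputs planned at time `k`: after relabelling blocks
(`bIdx_succ`), `v` or its shift applies the same input at every remaining absolute time. The two
trajectories then differ only through the disturbance in the first step, an error of at most
`au dbar` that subsequently propagates through `ax`, so it is bounded by `beta`
(`traj_nnnorm_sub_le`). The distance to `Xf` is 1-Lipschitz, which gives the terminal bound.
Admissibility of the shift holds because `N(k)` drops by one at a block boundary (`Nfree_succ`).
-/

open scoped NNReal

/-- A function `a : [0,∞) → [0,∞)` is of class 𝒦 if it is continuous,
strictly increasing, and satisfies `a 0 = 0`. -/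
def IsClassK (a : ℝ≥0 → ℝ≥0) : Prop :=
  Continuous a ∧ StrictMono a ∧ a 0 = 0

/-- The sequence β_k defined by β_0 = a_u and β_k(d) = a_u(d) + a_x(β_{k-1}(d)). -/
def beta (au ax : ℝ≥0 → ℝ≥0) : ℕ → ℝ≥0 → ℝ≥0
  | 0, d => au d
  | k + 1, d => au d + ax (beta au ax k d)

/-- The blocking index b(j,k) = ⌊(j + k − ⌊k/L⌋·L)/L⌋ + 1. -/
def bIdx (L j k : ℕ) : ℕ := (j + k - k / L * L) / L + 1

/-- The number of free (blocked) input values N(k) = ⌈(k_f − k)/L⌉. -/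
def Nfree (L kf k : ℕ) : ℕ := (kf - k + L - 1) / L

/-- The nominal blocked-input trajectory x(j|k) from state x at time k:
x(0|k) = x and x(j+1|k) = f(x(j|k), v(b(j,k))). -/
def traj {E F : Type*} (f : E → F → E) (L : ℕ) (v : ℕ → F) (x : E) (k : ℕ) : ℕ → E
  | 0 => x
  | j + 1 => f (traj f L v x k j) (v (bIdx L j k))

/-- Absolute time `j + k + 1` lies in the same block, whether seen from time `k` or from time
`k + 1`; the block's index drops by one exactly when a new block starts at time `k + 1`. -/
lemma bIdx_succ (L j k : ℕ) (hL : 1 ≤ L) :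
    bIdx L (j + 1) k = bIdx L j (k + 1) + if L ∣ k + 1 then 1 else 0 := by
  unfold bIdx
  rw [Nat.succ_div]
  split_ifs with h
  · have h1 : (k / L + 1) * L = k + 1 := by
      have := Nat.div_mul_cancel h
      rwa [Nat.succ_div, if_pos h] at this
    have h2 : j + 1 + k - k / L * L = j + L := by
      rw [add_mul, one_mul] at h1
      omega
    have h3 : j + (k + 1) - (k / L + 1) * L = j := by omega
    rw [h2, h3, Nat.add_div_right _ (by omega)]
  · have h1 : j + 1 + k = j + (k + 1) := by omega
    rw [h1, add_zero, add_zero]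

lemma bIdx_zero (L k : ℕ) (hL : 1 ≤ L) : bIdx L 0 k = 1 := by
  have h : 0 + k - k / L * L = k % L := by
    have := Nat.div_add_mod' k L
    omega
  rw [bIdx, h, Nat.div_eq_of_lt (Nat.mod_lt _ (by omega))]

/-- When a block starts at time `k + 1`, one free input fewer remains. This needs `L ∣ kf`: otherwise
the last block is incomplete and the ceiling need not drop. -/
lemma Nfree_succ (L kf k : ℕ) (hL : 1 ≤ L) (hdvd : L ∣ kf) (hk : k + 1 ≤ kf) (h : L ∣ k + 1) :
    Nfree L kf k = Nfree L kf (k + 1) + 1 := by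
  obtain ⟨m, hm⟩ := Nat.dvd_sub hdvd h
  unfold Nfree
  have h1 : kf - k + L - 1 = L * m + L := by omega
  have h2 : kf - (k + 1) + L - 1 = L * m + (L - 1) := by omega
  rw [h1, h2, Nat.add_div_right _ (by omega), Nat.mul_div_cancel_left _ (by omega),
    Nat.mul_add_div (by omega), Nat.div_eq_of_lt (by omega), add_zero]

/-- If `v'` prescribes at time `k + 1` the inputs that `v` prescribed at time `k`, the disturbed
trajectory stays within `beta j` of the old prediction: the disturbance contributes `au dbar` once,
and each further step applies `ax`. -/
lemma traj_nnnorm_sub_le {E F : Type*} [NormedAddCommGroup E] [NormedAddCommGroup F]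
    (ax au : ℝ≥0 → ℝ≥0) (hax : Monotone ax) (hau : Monotone au) (f : E → F → E)
    (hfx : ∀ (x1 x2 : E) (u : F), ‖f x1 u - f x2 u‖₊ ≤ ax ‖x1 - x2‖₊)
    (hfu : ∀ (x : E) (u1 u2 : F), ‖f x u1 - f x u2‖₊ ≤ au ‖u1 - u2‖₊)
    (L k : ℕ) (hL : 1 ≤ L) (v v' : ℕ → F)
    (hv : ∀ j, v (bIdx L (j + 1) k) = v' (bIdx L j (k + 1)))
    (xt : E) (d : F) (dbar : ℝ≥0) (hd : ‖d‖₊ ≤ dbar) (j : ℕ) :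
    ‖traj f L v' (f xt (v 1 + d)) (k + 1) j - traj f L v xt k (j + 1)‖₊ ≤ beta au ax j dbar := by
  induction j with
  | zero =>
    simp only [traj, beta, bIdx_zero L k hL]
    refine (hfu _ _ _).trans (hau ?_)
    simpa using hd
  | succ j ih =>
    rw [traj, traj, hv j, beta]
    exact ((hfx _ _ _).trans (hax ih)).trans le_add_self

/-- inductive step of Theorem 1: if v is admissible at time k with
nominal terminal distance at most γ from x̃, and the plant moves to
x̃′ = f(x̃, v(1) + d) with ‖d‖ ≤ d̄, then there is an admissible sequence at time
k + 1 (v itself if L ∤ k+1, its shift otherwise) whose nominal terminal distance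
from x̃′ is at most γ + β_{k_f−k−1}(d̄). -/
theorem relaxed_SBPC_inductive_step {E F : Type*}
    [NormedAddCommGroup E] [NormedSpace ℝ E] [NormedAddCommGroup F] [NormedSpace ℝ F]
    (ax au : ℝ≥0 → ℝ≥0) (hax : IsClassK ax) (hau : IsClassK au)
    (f : E → F → E)
    (hfx : ∀ (x1 x2 : E) (u : F), ‖f x1 u - f x2 u‖₊ ≤ ax ‖x1 - x2‖₊)
    (hfu : ∀ (x : E) (u1 u2 : F), ‖f x u1 - f x u2‖₊ ≤ au ‖u1 - u2‖₊)
    (Uc : Set F) (Xf : Set E) (hXf : Xf.Nonempty)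
    (L kf : ℕ) (hL : 1 ≤ L) (hdvd : L ∣ kf)
    (k : ℕ) (hk : k + 2 ≤ kf)
    (v : ℕ → F) (hadm : ∀ i, 1 ≤ i → i ≤ Nfree L kf k → v i ∈ Uc)
    (xt : E) (γ : ℝ≥0)
    (hγ : Metric.infNndist (traj f L v xt k (kf - k)) Xf ≤ γ)
    (d : F) (dbar : ℝ≥0) (hd : ‖d‖₊ ≤ dbar) :
    ∃ v' : ℕ → F,
      (¬ L ∣ (k + 1) → v' = v) ∧
      (L ∣ (k + 1) → v' = fun i => v (i + 1)) ∧
      (∀ i, 1 ≤ i → i ≤ Nfree L kf (k + 1) → v' i ∈ Uc) ∧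
      Metric.infNndist (traj f L v' (f xt (v 1 + d)) (k + 1) (kf - (k + 1))) Xf
        ≤ γ + beta au ax (kf - k - 1) dbar := by
  set v' : ℕ → F := fun i => v (i + if L ∣ k + 1 then 1 else 0) with hv'
  have hv : ∀ j, v (bIdx L (j + 1) k) = v' (bIdx L j (k + 1)) := fun j => by
    rw [bIdx_succ L j k hL]
  refine ⟨v', fun h => ?_, fun h => ?_, fun i hi hiN => ?_, ?_⟩
  · simp [hv', h]
  · simp [hv', h]
  · refine hadm _ (by omega) ?_
    split_ifs with h
    · rw [Nfree_succ L kf k hL hdvd (by omega) h]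
      omega
    · refine hiN.trans (Nat.div_le_div_right ?_)
      omega
  · have hdist := traj_nnnorm_sub_le ax au hax.2.1.monotone hau.2.1.monotone f hfx hfu L k hL
      v v' hv xt d dbar hd (kf - k - 1)
    have hidx : kf - k - 1 + 1 = kf - k := by omega
    rw [hidx, ← nndist_eq_nnnorm] at hdist
    rw [← Nat.sub_sub]
    have htri := Metric.infDist_le_infDist_add_dist (s := Xf)
      (x := traj f L v' (f xt (v 1 + d)) (k + 1) (kf - k - 1)) (y := traj f L v xt k (kf - k))
    rw [← Metric.coe_infNndist, ← Metric.coe_infNndist, ← coe_nndist] at htri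
    exact le_trans (by exact_mod_cast htri) (add_le_add hγ hdist)
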